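/- For every integer i ≥ 1, ν₂(S(8i+4, 5)) ≥ 2, i.e., 4 divides S(8i+4, 5). -/

import Mathlib

/-- Stirling numbers of the second kind, via the recurrence
`S(n+1,k+1) = S(n,k) + (k+1)·S(n,k+1)`. -/
def stirling2 : ℕ → ℕ → ℕ
  | 0, 0 => 1
  | 0, _ + 1 => 0
  | _ + 1, 0 => 0
  | n + 1, k + 1 => stirling2 n k + (k + 1) * stirling2 n (k + 1)

/-!
By the recurrence, row `n` of the Stirling triangle up to column `k` determines the next row up to
column `k`, also modulo `m`: once two truncated rows agree modulo `m`, the rows repeat with the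
period given by their distance. Modulo 4 and up to column 5, rows 4 and 12 are both
`0, 1, 3, 2, 1, 0`, so every `S(8i+4, 5)` is congruent to `S(4, 5) = 0`.
-/

theorem stirling2_eq_stirlingSecond (n k : ℕ) : stirling2 n k = Nat.stirlingSecond n k := by
  induction n generalizing k with
  | zero => cases k <;> rfl
  | succ n ih =>
    cases k with
    | zero => rfl
    | succ k => rw [stirling2, Nat.stirlingSecond_succ_succ, ih, ih, add_comm]

theorem stirlingSecond_pos {n k : ℕ} (hk : 0 < k) (hkn : k ≤ n) :
    0 < Nat.stirlingSecond n k := by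
  induction n, hkn using Nat.le_induction with
  | base => simp [Nat.stirlingSecond_self]
  | succ n _ ih =>
    rw [Nat.stirlingSecond_succ_left n k hk.ne']
    positivity

section Periodicity

variable {m k : ℕ}

theorem stirlingSecond_add_modEq_add {a b : ℕ}
    (hrow : ∀ j ≤ k, Nat.stirlingSecond a j ≡ Nat.stirlingSecond b j [MOD m]) (r : ℕ) :
    ∀ j ≤ k, Nat.stirlingSecond (a + r) j ≡ Nat.stirlingSecond (b + r) j [MOD m] := by
  induction r with
  | zero => exact hrow
  | succ r ih =>
    rintro (_ | j) hj
    · rfl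
    · exact ((ih (j + 1) hj).mul_left (j + 1)).add (ih j (Nat.le_of_succ_le hj))

theorem stirlingSecond_add_mul_modEq {n p : ℕ}
    (hperiod : ∀ j ≤ k, Nat.stirlingSecond (n + p) j ≡ Nat.stirlingSecond n j [MOD m]) (t : ℕ) :
    ∀ j ≤ k, Nat.stirlingSecond (n + p * t) j ≡ Nat.stirlingSecond n j [MOD m] := by
  induction t with
  | zero => exact fun _ _ => rfl
  | succ t ih =>
    intro j hj
    calc Nat.stirlingSecond (n + p * (t + 1)) j
        = Nat.stirlingSecond (n + p + p * t) j := by rw [mul_add_one, add_right_comm, add_assoc]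
      _ ≡ Nat.stirlingSecond (n + p * t) j [MOD m] :=
        stirlingSecond_add_modEq_add hperiod (p * t) j hj
      _ ≡ Nat.stirlingSecond n j [MOD m] := ih j hj

end Periodicity

theorem four_dvd_stirlingSecond_eight_mul_add_four_five (i : ℕ) :
    4 ∣ Nat.stirlingSecond (8 * i + 4) 5 := by
  have row_twelve_modEq_row_four :
      ∀ j ≤ 5, Nat.stirlingSecond (4 + 8) j ≡ Nat.stirlingSecond 4 j [MOD 4] := by
    decide
  rw [add_comm, ← Nat.modEq_zero_iff_dvd]
  calc Nat.stirlingSecond (4 + 8 * i) 5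
      ≡ Nat.stirlingSecond 4 5 [MOD 4] :=
        stirlingSecond_add_mul_modEq row_twelve_modEq_row_four i 5 le_rfl
    _ = 0 := Nat.stirlingSecond_eq_zero_of_lt (by norm_num)

/-- For i ≥ 1, ν₂(S(8i+4,5)) ≥ 2. -/
theorem nu2_stirling_five_8i4 (i : ℕ) (hi : 1 ≤ i) :
    2 ≤ padicValNat 2 (stirling2 (8 * i + 4) 5) := by
  rw [stirling2_eq_stirlingSecond]
  have hpos : 0 < Nat.stirlingSecond (8 * i + 4) 5 := stirlingSecond_pos (by lia) (by lia)
  rw [← padicValNat_dvd_iff_le hpos.ne']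
  exact four_dvd_stirlingSecond_eight_mul_add_four_five i
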